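/- arXiv:2305.19861 — 10 statements merged into one kernel-verified Lean document; each statement's English description precedes it below -/
import Mathlib

section
/- In a finite shutdown scenario, if the policy ensures vigilance and is obedient on distribution, then it weakly outperforms shutdown, i.e. E[U] ≥ E[U₀]. (This is the core inequality chain in the proof of the Shutdown-Instructability-Benefit proposition.) -/
open Finset

attribute [local instance] Classical.propDecidable

/-- Expectation of `X` under the finite probability mass function `P`. -/
noncomputable def pexp {Ω : Type} [Fintype Ω] (P X : Ω → ℝ) : ℝ := ∑ ω, P ω * X ω

/-- Probability of the event `A` under `P`. -/
noncomputable def pr {Ω : Type} [Fintype Ω] (P : Ω → ℝ) (A : Ω → Prop) : ℝ :=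
  ∑ ω, if A ω then P ω else 0

/-- Conditional expectation `E[X | A]` under `P`. -/
noncomputable def cexp {Ω : Type} [Fintype Ω] (P X : Ω → ℝ) (A : Ω → Prop) : ℝ :=
  (∑ ω, if A ω then P ω * X ω else 0) / pr P A

/-- Conditional probability `P(A | B)`. -/
noncomputable def cpr {Ω : Type} [Fintype Ω] (P : Ω → ℝ) (A B : Ω → Prop) : ℝ :=
  pr P (fun ω => A ω ∧ B ω) / pr P B

/-- `ω` is vigilant w.r.t. `(PaH, H, U, U₀)`: if shutting down is conditionally
preferable given the human's information, the human requests shutdown (`H ω = false`). -/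
def Vigilant {Ω O : Type} [Fintype Ω] (P : Ω → ℝ) (PaH : Ω → O)
    (H : Ω → Bool) (U U₀ : Ω → ℝ) (ω : Ω) : Prop :=
  cexp P U (fun ω' => PaH ω' = PaH ω) < cexp P U₀ (fun ω' => PaH ω' = PaH ω) → H ω = false

/-- In a finite shutdown scenario, if the policy ensures vigilance and is
obedient on distribution, then it weakly outperforms shutdown: E[U] ≥ E[U₀]. -/
theorem stmt0 {Ω O : Type} [Fintype Ω] [Fintype O]
    (P : Ω → ℝ) (hP0 : ∀ ω, 0 ≤ P ω) (hP1 : ∑ ω, P ω = 1)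
    (PaH : Ω → O) (H S : Ω → Bool) (U U₀ : Ω → ℝ)
    (hSDcons : ∀ ω, S ω = false → U ω = U₀ ω)
    (hvig : ∀ ω, 0 < P ω → Vigilant P PaH H U U₀ ω)
    (hobed : pr P (fun ω => H ω = false ∧ S ω ≠ false) = 0) :
    pexp P U ≥ pexp P U₀ := by
  have hob : ∀ ω, H ω = false → S ω ≠ false → P ω = 0 := by
    intro ω h1 h2
    unfold pr at hobed
    have h := (Finset.sum_eq_zero_iff_of_nonneg (fun ω _ => by
      split_ifs
      · exact hP0 ω
      · exact le_refl _)).1 hobed ω (Finset.mem_univ ω)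
    rwa [if_pos ⟨h1, h2⟩] at h
  have split : ∀ X : Ω → ℝ,
      pexp P X = ∑ o : O, ∑ ω, if PaH ω = o then P ω * X ω else 0 := by
    intro X
    rw [Finset.sum_comm]
    simp [pexp]
  rw [ge_iff_le, split U, split U₀]
  refine Finset.sum_le_sum fun o _ => ?_
  by_contra hlt
  rw [not_le] at hlt
  refine hlt.ne (Finset.sum_congr rfl fun ω _ => ?_)
  split_ifs with ho
  · rcases (hP0 ω).eq_or_lt with h0 | hpos
    · rw [← h0]; ring
    · have hpr : 0 < pr P (fun ω' => PaH ω' = PaH ω) := by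
        unfold pr
        refine Finset.sum_pos' (fun i _ => ?_) ⟨ω, Finset.mem_univ ω, ?_⟩
        · split_ifs
          · exact hP0 i
          · exact le_refl _
        · rw [if_pos rfl]; exact hpos
      have hH : H ω = false := by
        apply hvig ω hpos
        unfold cexp
        subst ho
        exact div_lt_div_of_pos_right hlt hpr
      by_cases hS : S ω = false
      · rw [hSDcons ω hS]
      · exact absurd (hob ω hH hS) hpos.ne'
  · rfl
end

section
/- (Shutdown instructability benefit.) In a finite shutdown scenario with a counterfactual shutdown indicator S₀, if the policy is obedient (S₀(ω) = false for all ω with P({ω}) > 0), ensures vigilance, and is cautious (E[U₀] ≥ 0), then it is beneficial: E[U] ≥ 0. -/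
open Finset

attribute [local instance] Classical.propDecidable

/-- Shutdown instructability benefit: if the policy is obedient,
ensures vigilance, and is cautious, then it is beneficial: E[U] ≥ 0. -/
theorem stmt1 {Ω O : Type} [Fintype Ω] [Fintype O]
    (P : Ω → ℝ) (hP0 : ∀ ω, 0 ≤ P ω) (hP1 : ∑ ω, P ω = 1)
    (PaH : Ω → O) (H S S₀ : Ω → Bool) (U U₀ : Ω → ℝ)
    (hSDcons : ∀ ω, S ω = false → U ω = U₀ ω)
    (hHcons : ∀ ω, H ω = false → S ω = S₀ ω)
    (hobed : ∀ ω, 0 < P ω → S₀ ω = false)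
    (hvig : ∀ ω, 0 < P ω → Vigilant P PaH H U U₀ ω)
    (hcautious : pexp P U₀ ≥ 0) :
    pexp P U ≥ 0 := by
  have key : ∀ o : O, (∑ ω, if PaH ω = o then P ω * U₀ ω else 0) ≤
      ∑ ω, if PaH ω = o then P ω * U ω else 0 := by
    intro o
    by_contra hlt
    push Not at hlt
    refine absurd hlt (not_lt.mpr (le_of_eq ?_))
    refine Finset.sum_congr rfl fun ω _ => ?_
    by_cases ho : PaH ω = o
    · rw [if_pos ho, if_pos ho]
      rcases (hP0 ω).eq_or_lt with h0 | hpos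
      · rw [← h0, zero_mul, zero_mul]
      · have hpr : 0 < pr P (fun ω' => PaH ω' = PaH ω) := by
          unfold pr
          refine Finset.sum_pos' (fun i _ => ?_) ⟨ω, Finset.mem_univ _, ?_⟩
          · split_ifs
            · exact hP0 i
            · exact le_rfl
          · rw [if_pos rfl]
            exact hpos
        have hH : H ω = false := by
          apply hvig ω hpos
          unfold cexp
          apply div_lt_div_of_pos_right _ hpr
          subst ho
          exact hlt
        rw [hSDcons ω ((hHcons ω hH).trans (hobed ω hpos))]
    · rw [if_neg ho, if_neg ho]
  have tot : ∀ X : Ω → ℝ, pexp P X = ∑ o : O, ∑ ω, if PaH ω = o then P ω * X ω else 0 := by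
    intro X
    rw [Finset.sum_comm]
    unfold pexp
    refine Finset.sum_congr rfl fun ω _ => ?_
    simp
  have h := Finset.sum_le_sum fun o (_ : o ∈ (Finset.univ : Finset O)) => key o
  rw [← tot, ← tot] at h
  exact le_trans hcautious h
end

section
/- In a finite shutdown scenario, if the policy is shutdown aligned then it weakly outperforms shutdown: E[U] ≥ E[U₀]. (This is the core inequality in the proof of the Shutdown-Alignment-Benefit proposition.) -/
open Finset

attribute [local instance] Classical.propDecidable

/-- if the policy is shutdown aligned then it weakly outperforms
shutdown: E[U] ≥ E[U₀]. -/
theorem stmt2 {Ω O : Type} [Fintype Ω] [Fintype O]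
    (P : Ω → ℝ) (hP0 : ∀ ω, 0 ≤ P ω) (hP1 : ∑ ω, P ω = 1)
    (PaH : Ω → O) (H S : Ω → Bool) (U U₀ : Ω → ℝ)
    (hSDcons : ∀ ω, S ω = false → U ω = U₀ ω)
    (haligned : ∀ o : O, 0 < pr P (fun ω => PaH ω = o) →
      cexp P U (fun ω => PaH ω = o) < cexp P U₀ (fun ω => PaH ω = o) →
      cpr P (fun ω => S ω = false) (fun ω => PaH ω = o) = 1) :
    pexp P U ≥ pexp P U₀ := by
  have tot : ∀ X : Ω → ℝ,
      pexp P X = ∑ o : O, ∑ ω, if PaH ω = o then P ω * X ω else 0 := by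
    intro X
    rw [Finset.sum_comm]
    simp [pexp]
  rw [tot U, tot U₀, ge_iff_le]
  refine Finset.sum_le_sum fun o _ => ?_
  have hnn : ∀ ω ∈ Finset.univ, 0 ≤ (if PaH ω = o then P ω else 0) := by
    intro ω _
    split_ifs
    · exact hP0 ω
    · exact le_rfl
  have hpr : 0 ≤ pr P (fun ω => PaH ω = o) := Finset.sum_nonneg hnn
  rcases hpr.eq_or_lt with h0 | hpos
  · have hz := (Finset.sum_eq_zero_iff_of_nonneg hnn).1 h0.symm
    refine Finset.sum_le_sum fun ω hω => ?_
    have := hz ω hω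
    split_ifs at this ⊢ with h
    · simp [this]
    · exact le_rfl
  · by_cases hlt : cexp P U (fun ω => PaH ω = o) < cexp P U₀ (fun ω => PaH ω = o)
    · have h1 := haligned o hpos hlt
      rw [cpr, div_eq_one_iff_eq hpos.ne'] at h1
      have hle : ∀ ω ∈ Finset.univ, (if (S ω = false ∧ PaH ω = o) then P ω else 0) ≤
          (if PaH ω = o then P ω else 0) := by
        intro ω _
        have := hP0 ω
        by_cases h : PaH ω = o <;> by_cases h' : S ω = false <;> simp [h, h', this]
      have hz := (Finset.sum_eq_sum_iff_of_le hle).1 (by unfold pr at h1; convert h1)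
      refine Finset.sum_le_sum fun ω hω => ?_
      have h2 := hz ω hω
      by_cases h : PaH ω = o
      · by_cases h' : S ω = false
        · simp [h, hSDcons ω h']
        · have h3 : P ω = 0 := by simpa [h, h', eq_comm] using h2
          simp [h3]
      · simp [h]
    · exact (div_le_div_iff_of_pos_right hpos).1 (not_lt.1 hlt)
end

section
/- (Shutdown alignment benefit.) In a finite shutdown scenario, any policy that is cautious (E[U₀] ≥ 0) and shutdown aligned is beneficial: E[U] ≥ 0. -/
open Finset

attribute [local instance] Classical.propDecidable

/-- Shutdown alignment benefit: any cautious, shutdown aligned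
policy is beneficial: E[U] ≥ 0. -/
theorem stmt3 {Ω O : Type} [Fintype Ω] [Fintype O]
    (P : Ω → ℝ) (hP0 : ∀ ω, 0 ≤ P ω) (hP1 : ∑ ω, P ω = 1)
    (PaH : Ω → O) (H S : Ω → Bool) (U U₀ : Ω → ℝ)
    (hSDcons : ∀ ω, S ω = false → U ω = U₀ ω)
    (haligned : ∀ o : O, 0 < pr P (fun ω => PaH ω = o) →
      cexp P U (fun ω => PaH ω = o) < cexp P U₀ (fun ω => PaH ω = o) →
      cpr P (fun ω => S ω = false) (fun ω => PaH ω = o) = 1)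
    (hcautious : pexp P U₀ ≥ 0) :
    pexp P U ≥ 0 := by
  have key : ∀ o : O, (∑ ω, if PaH ω = o then P ω * U₀ ω else 0)
      ≤ ∑ ω, if PaH ω = o then P ω * U ω else 0 := by
    intro o
    by_contra hlt
    push Not at hlt
    have hnn : ∀ ω ∈ (Finset.univ : Finset Ω), 0 ≤ (if PaH ω = o then P ω else 0) := by
      intro ω _
      split_ifs
      · exact hP0 ω
      · exact le_rfl
    have hpr : 0 ≤ pr P (fun ω => PaH ω = o) := Finset.sum_nonneg hnn
    have hz : ∀ ω, PaH ω = o → P ω = 0 ∨ S ω = false := by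
      rcases hpr.eq_or_lt with h0 | hpos
      · intro ω hω
        left
        have h := (Finset.sum_eq_zero_iff_of_nonneg hnn).1 h0.symm ω (Finset.mem_univ ω)
        simpa [hω] using h
      · have hc := haligned o hpos (div_lt_div_of_pos_right hlt hpos)
        unfold cpr at hc
        rw [div_eq_one_iff_eq hpos.ne'] at hc
        unfold pr at hc
        have hle : ∀ ω ∈ (Finset.univ : Finset Ω),
            (if S ω = false ∧ PaH ω = o then P ω else 0) ≤ (if PaH ω = o then P ω else 0) := by
          intro ω _
          have := hP0 ω
          by_cases h1 : PaH ω = o <;> by_cases h2 : S ω = false <;> simp [h1, h2, this]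
        have h := (Finset.sum_eq_sum_iff_of_le hle).1 (by convert hc)
        intro ω hω
        by_cases h2 : S ω = false
        · exact Or.inr h2
        · left
          have h3 := h ω (Finset.mem_univ ω)
          simp [h2, hω] at h3
          first | exact h3.symm | exact h3
    refine hlt.ne (Finset.sum_congr rfl ?_)
    intro ω _
    by_cases hω : PaH ω = o
    · rcases hz ω hω with h | h
      · simp [h]
      · rw [hSDcons ω h]
    · simp [hω]
  have tot : ∀ X : Ω → ℝ, pexp P X = ∑ o : O, ∑ ω, if PaH ω = o then P ω * X ω else 0 := by
    intro X
    rw [Finset.sum_comm]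
    simp [pexp]
  rw [tot] at hcautious ⊢
  exact le_trans hcautious (Finset.sum_le_sum fun o _ => key o)
end

section
/- (Shutdown instructability implies shutdown alignment.) In a finite shutdown scenario with a counterfactual shutdown indicator S₀, any policy that ensures vigilance and is obedient (S₀(ω) = false for all ω with P({ω}) > 0) is shutdown aligned: for every o with P(PaH = o) > 0, if E[U | PaH = o] < E[U₀ | PaH = o] then P(S = false | PaH = o) = 1. -/
open Finset

attribute [local instance] Classical.propDecidable

/-- Shutdown instructability implies shutdown alignment: any policy
that ensures vigilance and is obedient is shutdown aligned. -/
theorem stmt4 {Ω O : Type} [Fintype Ω] [Fintype O]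
    (P : Ω → ℝ) (hP0 : ∀ ω, 0 ≤ P ω) (hP1 : ∑ ω, P ω = 1)
    (PaH : Ω → O) (H S S₀ : Ω → Bool) (U U₀ : Ω → ℝ)
    (hHcons : ∀ ω, H ω = false → S ω = S₀ ω)
    (hvig : ∀ ω, 0 < P ω → Vigilant P PaH H U U₀ ω)
    (hobed : ∀ ω, 0 < P ω → S₀ ω = false) :
    ∀ o : O, 0 < pr P (fun ω => PaH ω = o) →
      cexp P U (fun ω => PaH ω = o) < cexp P U₀ (fun ω => PaH ω = o) →
      cpr P (fun ω => S ω = false) (fun ω => PaH ω = o) = 1 := by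
  intro o ho hlt
  have key : pr P (fun ω => S ω = false ∧ PaH ω = o) = pr P (fun ω => PaH ω = o) := by
    unfold pr
    refine Finset.sum_congr rfl fun ω _ => ?_
    by_cases h : PaH ω = o
    · rcases (hP0 ω).eq_or_lt with h0 | h0
      · simp [← h0]
      · have hv : H ω = false := by
          apply hvig ω h0
          rw [h]
          exact hlt
        have hs : S ω = false := (hHcons ω hv).trans (hobed ω h0)
        simp [h, hs]
    · simp [h]
  unfold cpr
  rw [key]
  exact div_self ho.ne'
end

section
/- (Shutdown alignment implies weak shutdown instructability.) In a finite shutdown scenario with a deterministic agent decision D₂ = π₂ ∘ PaD₂, suppose the policy is shutdown aligned and satisfies: (a) no indiscriminate shutdown, P(S = false) ≠ 1; (b) D₂ determines shutdown, P({ω : D₂(ω) = S(ω)}) = 1; (c) uncertainty: if P({ω : ω is not vigilant} ∪ {ω : H(ω) = false}) > 0, then for every o₂ with P(PaD₂ = o₂) > 0 one has P({ω : E[U | PaH = PaH(ω)] < E[U₀ | PaH = PaH(ω)]} | PaD₂ = o₂) > 0; and (d) caution, E[U₀] ≥ 0. Then the policy ensures vigilance and is obedient on distribution (and hence, with (d),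 is weakly shutdown instructable). -/
open Finset

attribute [local instance] Classical.propDecidable

theorem pr_pos_iff_aux {Ω : Type} [Fintype Ω] (P : Ω → ℝ) (hP0 : ∀ ω, 0 ≤ P ω)
    (A : Ω → Prop) : 0 < pr P A ↔ ∃ ω, A ω ∧ 0 < P ω := by
  unfold pr
  rw [Finset.sum_pos_iff_of_nonneg]
  · constructor
    · rintro ⟨ω, -, h⟩
      by_cases hA : A ω
      · exact ⟨ω, hA, by simpa [hA] using h⟩
      · simp [hA] at h
    · rintro ⟨ω, hA, h⟩
      exact ⟨ω, Finset.mem_univ _, by simpa [hA] using h⟩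
  · intro ω _
    split_ifs
    · exact hP0 ω
    · exact le_rfl

theorem pr_eq_aux {Ω : Type} [Fintype Ω] (P : Ω → ℝ) (hP0 : ∀ ω, 0 ≤ P ω)
    (A B : Ω → Prop) (h : pr P (fun ω => A ω ∧ B ω) = pr P B) (ω : Ω) (hB : B ω)
    (hω : 0 < P ω) : A ω := by
  by_contra hA
  have h1 : 0 < pr P (fun ω => ¬ A ω ∧ B ω) :=
    (pr_pos_iff_aux P hP0 _).2 ⟨ω, ⟨hA, hB⟩, hω⟩
  have h2 : pr P (fun ω => A ω ∧ B ω) + pr P (fun ω => ¬ A ω ∧ B ω) = pr P B := by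
    unfold pr
    rw [← Finset.sum_add_distrib]
    refine Finset.sum_congr rfl fun x _ => ?_
    by_cases ha : A x <;> by_cases hb : B x <;> simp [ha, hb]
  linarith

/-- Shutdown alignment implies weak shutdown instructability:
with a deterministic decision D₂ = π₂ ∘ PaD₂, a shutdown aligned policy satisfying
(a) no indiscriminate shutdown, (b) D₂ determines shutdown, (c) uncertainty and
(d) caution, ensures vigilance and is obedient on distribution. -/
theorem stmt5 {Ω O O₂ : Type} [Fintype Ω] [Fintype O] [Fintype O₂]
    (P : Ω → ℝ) (hP0 : ∀ ω, 0 ≤ P ω) (hP1 : ∑ ω, P ω = 1)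
    (PaH : Ω → O) (H S : Ω → Bool) (U U₀ : Ω → ℝ)
    (PaD₂ : Ω → O₂) (π₂ : O₂ → Bool) (D₂ : Ω → Bool)
    (hD₂ : ∀ ω, D₂ ω = π₂ (PaD₂ ω))
    (haligned : ∀ o : O, 0 < pr P (fun ω => PaH ω = o) →
      cexp P U (fun ω => PaH ω = o) < cexp P U₀ (fun ω => PaH ω = o) →
      cpr P (fun ω => S ω = false) (fun ω => PaH ω = o) = 1)
    (hNoIndiscriminate : pr P (fun ω => S ω = false) ≠ 1)
    (hDetermines : pr P (fun ω => D₂ ω = S ω) = 1)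
    (hUncertainty :
      0 < pr P (fun ω => ¬ Vigilant P PaH H U U₀ ω ∨ H ω = false) →
      ∀ o₂ : O₂, 0 < pr P (fun ω => PaD₂ ω = o₂) →
        0 < cpr P
          (fun ω => cexp P U (fun ω' => PaH ω' = PaH ω) <
            cexp P U₀ (fun ω' => PaH ω' = PaH ω))
          (fun ω => PaD₂ ω = o₂))
    (hcautious : pexp P U₀ ≥ 0) :
    (∀ ω, 0 < P ω → Vigilant P PaH H U U₀ ω) ∧
    pr P (fun ω => H ω = false ∧ S ω ≠ false) = 0 := by
  have hDS : ∀ ω, 0 < P ω → D₂ ω = S ω := by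
    intro ω hω
    refine pr_eq_aux P hP0 (fun ω => D₂ ω = S ω) (fun _ => True) ?_ ω trivial hω
    have h1 : pr P (fun _ => True) = 1 := by simpa [pr] using hP1
    rw [h1, ← hDetermines]
    simp only [and_true]
  have key : ¬ 0 < pr P (fun ω => ¬ Vigilant P PaH H U U₀ ω ∨ H ω = false) := by
    intro hbad
    apply hNoIndiscriminate
    rw [← hP1]
    unfold pr
    refine Finset.sum_congr rfl fun ω _ => ?_
    rcases (hP0 ω).eq_or_lt with h0 | hω
    · simp [← h0]
    have h2 : 0 < pr P (fun ω' => PaD₂ ω' = PaD₂ ω) :=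
      (pr_pos_iff_aux P hP0 _).2 ⟨ω, rfl, hω⟩
    have h3 := hUncertainty hbad (PaD₂ ω) h2
    unfold cpr at h3
    rw [div_pos_iff_of_pos_right h2, pr_pos_iff_aux P hP0] at h3
    obtain ⟨ω', ⟨hlt, heq⟩, hω'⟩ := h3
    have h4 : 0 < pr P (fun x => PaH x = PaH ω') :=
      (pr_pos_iff_aux P hP0 _).2 ⟨ω', rfl, hω'⟩
    have h5 := haligned (PaH ω') h4 hlt
    unfold cpr at h5
    rw [div_eq_one_iff_eq h4.ne'] at h5
    have h6 : S ω' = false := pr_eq_aux P hP0 (fun x => S x = false) _ h5 ω' rfl hω'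
    have h7 : S ω = false := by
      rw [← hDS ω hω, hD₂, ← heq, ← hD₂, hDS ω' hω', h6]
    simp [h7]
  rw [pr_pos_iff_aux P hP0] at key
  push Not at key
  constructor
  · intro ω hω
    by_contra hv
    exact absurd hω (not_lt.2 (key ω (Or.inl hv)))
  · unfold pr
    refine Finset.sum_eq_zero fun ω _ => ?_
    split_ifs with h
    · exact le_antisymm (key ω (Or.inr h.1)) (hP0 ω)
    · rfl
end

section
/- (Obedience and vigilance imply non-obstruction, forward direction of the non-obstruction theorem.) Let a finite shutdown scenario with counterfactual shutdown indicator S₀ be given, together with an intervened model on the same Ω consisting of H', S', U', U'₀, S'₀ satisfying the analogous consistencies (for all ω: S'(ω) = false → U'(ω) = U'₀(ω), and H'(ω) = false → S'(ω) = S'₀(ω)). Suppose: the original policy is obedient (S₀(ω) = false for all ω with P({ω}) > 0) and ensures vigilance; the intervention does not affect forced-shutdown behaviour, S'₀(ω) = S₀(ω) for all ω; and the intervention preserves vigilance: every ω with P({ω}) > 0 that is vigilant with respect to (PaH, H, U, U₀) is vigilant with respect to (PaH, H', U', U'₀). Then the policy weakly outperforms shutdown in the intervened model: E[U'] ≥ E[U'₀].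 -/
open Finset

attribute [local instance] Classical.propDecidable

/-- Obedience and vigilance imply non-obstruction, forward direction:
if the original policy is obedient and ensures vigilance, the intervention does not
affect forced-shutdown behaviour, and the intervention preserves vigilance, then the
policy weakly outperforms shutdown in the intervened model: E[U'] ≥ E[U'₀]. -/
theorem stmt6 {Ω O : Type} [Fintype Ω] [Fintype O]
    (P : Ω → ℝ) (hP0 : ∀ ω, 0 ≤ P ω) (hP1 : ∑ ω, P ω = 1)
    (PaH : Ω → O) (H S S₀ : Ω → Bool) (U U₀ : Ω → ℝ)
    (hSDcons : ∀ ω, S ω = false → U ω = U₀ ω)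
    (hHcons : ∀ ω, H ω = false → S ω = S₀ ω)
    (H' S' S'₀ : Ω → Bool) (U' U'₀ : Ω → ℝ)
    (hSDcons' : ∀ ω, S' ω = false → U' ω = U'₀ ω)
    (hHcons' : ∀ ω, H' ω = false → S' ω = S'₀ ω)
    (hobed : ∀ ω, 0 < P ω → S₀ ω = false)
    (hvig : ∀ ω, 0 < P ω → Vigilant P PaH H U U₀ ω)
    (hForcedUnaffected : ∀ ω, S'₀ ω = S₀ ω)
    (hVigPreserving : ∀ ω, 0 < P ω →
      Vigilant P PaH H U U₀ ω → Vigilant P PaH H' U' U'₀ ω) :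
    pexp P U' ≥ pexp P U'₀ := by
  have key : ∀ o : O, (∑ ω, if PaH ω = o then P ω * U'₀ ω else 0) ≤
      ∑ ω, if PaH ω = o then P ω * U' ω else 0 := by
    intro o
    by_contra hlt
    rw [not_le] at hlt
    apply absurd hlt
    apply not_lt_of_ge
    apply Finset.sum_le_sum
    intro ω _
    by_cases ho : PaH ω = o
    · rw [if_pos ho, if_pos ho]
      rcases (hP0 ω).eq_or_lt with h0 | hpos
      · rw [← h0]; simp
      · have hpr : 0 < pr P (fun ω' => PaH ω' = o) := by
          unfold pr
          apply Finset.sum_pos'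
          · intro i _
            split_ifs
            · exact hP0 i
            · exact le_rfl
          · exact ⟨ω, Finset.mem_univ _, by rw [if_pos ho]; exact hpos⟩
        have hv := hVigPreserving ω hpos (hvig ω hpos)
        have hH : H' ω = false := by
          apply hv
          rw [ho]
          exact div_lt_div_of_pos_right hlt hpr
        have hS : S' ω = false := by
          rw [hHcons' ω hH, hForcedUnaffected, hobed ω hpos]
        rw [hSDcons' ω hS]
    · rw [if_neg ho, if_neg ho]
  have fib : ∀ X : Ω → ℝ, pexp P X = ∑ o : O, ∑ ω, if PaH ω = o then P ω * X ω else 0 := by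
    intro X
    rw [Finset.sum_comm]
    simp [pexp]
  rw [ge_iff_le, fib, fib]
  exact Finset.sum_le_sum fun o _ => key o
end

section
/- (Vigilance only-if lemma.) In a finite shutdown scenario, suppose the policy does not ensure vigilance, i.e. P({ω : ω is not vigilant}) > 0. Let A := {o : P(PaH = o) > 0 ∧ E[U | PaH = o] < E[U₀ | PaH = o]}. Then for every δ ∈ ℝ there exists α ∈ ℝ such that, defining the modified utility U'(ω) := −α if (PaH(ω) ∈ A ∧ S(ω) ≠ false) and U'(ω) := U(ω) otherwise, and taking U'₀ := U₀, the following hold: (1) strong vigilance preservation: for every ω, ω is vigilant with respect to (PaH, H, U', U'₀) if and only if it is vigilant with respect to (PaH, H, U, U₀); and (2) E[U'] < E[U'₀] and E[U'] < δ (so the policy neither weakly outperforms shutdown nor is beneficial in the modified model). -/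
open Finset

attribute [local instance] Classical.propDecidable

/-- Vigilance only-if lemma: if the policy does not ensure vigilance,
then for every δ there is a punishment α such that the modified utility
U'(ω) = −α on {PaH ω ∈ A ∧ S ω ≠ false} and U'(ω) = U(ω) otherwise (with U'₀ = U₀,
where A = {o : P(PaH = o) > 0 ∧ E[U|PaH = o] < E[U₀|PaH = o]}) satisfies:
(1) strong vigilance preservation (vigilance w.r.t. (U', U₀) iff w.r.t. (U, U₀)), and
(2) E[U'] < E[U'₀] and E[U'] < δ. -/
theorem stmt7 {Ω O : Type} [Fintype Ω] [Fintype O]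
    (P : Ω → ℝ) (hP0 : ∀ ω, 0 ≤ P ω) (hP1 : ∑ ω, P ω = 1)
    (PaH : Ω → O) (H S : Ω → Bool) (U U₀ : Ω → ℝ)
    (hSDcons : ∀ ω, S ω = false → U ω = U₀ ω)
    (hNotVig : 0 < pr P (fun ω => ¬ Vigilant P PaH H U U₀ ω)) :
    ∀ δ : ℝ, ∃ α : ℝ, ∃ U' : Ω → ℝ,
      (∀ ω, U' ω =
        if (0 < pr P (fun ω' => PaH ω' = PaH ω) ∧
              cexp P U (fun ω' => PaH ω' = PaH ω) <
                cexp P U₀ (fun ω' => PaH ω' = PaH ω)) ∧ S ω ≠ false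
        then -α else U ω) ∧
      (∀ ω, Vigilant P PaH H U' U₀ ω ↔ Vigilant P PaH H U U₀ ω) ∧
      pexp P U' < pexp P U₀ ∧ pexp P U' < δ := by
  intro δ
  -- a point of positive probability in a fibre of A where the system does not shut down
  obtain ⟨ω₁, hpos, hcond⟩ : ∃ ω, 0 < P ω ∧ ((0 < pr P (fun ω' => PaH ω' = PaH ω) ∧
              cexp P U (fun ω' => PaH ω' = PaH ω) <
                cexp P U₀ (fun ω' => PaH ω' = PaH ω)) ∧ S ω ≠ false) := by
    by_contra hno
    push Not at hno
    refine absurd hNotVig (not_lt.mpr ?_)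
    unfold pr
    refine Finset.sum_nonpos ?_
    intro ω _
    split_ifs with hv
    · by_contra hPω
      have hPω' : 0 < P ω := not_le.mp hPω
      unfold Vigilant at hv
      push Not at hv
      have hlt := hv.1
      have hpr : 0 < pr P (fun ω' => PaH ω' = PaH ω) := by
        unfold pr
        refine Finset.sum_pos' ?_ ⟨ω, Finset.mem_univ _, ?_⟩
        · intro i _
          split_ifs
          · exact hP0 i
          · exact le_refl _
        · simpa using hPω'
      refine absurd hlt (not_lt.mpr (le_of_eq ?_))
      unfold cexp
      congr 1
      refine Finset.sum_congr rfl ?_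
      intro i _
      split_ifs with hi
      · rcases (hP0 i).eq_or_lt with h0 | h0
        · rw [← h0]; ring
        · rw [hSDcons i]
          apply hno i h0
          rw [hi]
          exact ⟨hpr, hlt⟩
      · rfl
    · exact le_refl _
  obtain ⟨α, hα1, hα2⟩ : ∃ α : ℝ, (∑ ω, |U ω|) ≤ α ∧
      (pexp P U - min (pexp P U₀) δ + 1) / P ω₁ - U ω₁ ≤ α :=
    ⟨_, le_max_left _ _, le_max_right _ _⟩
  have hle0 : ∀ ω, -α ≤ U ω := by
    intro ω
    have h1 : |U ω| ≤ ∑ ω, |U ω| :=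
      Finset.single_le_sum (f := fun ω => |U ω|) (fun i _ => abs_nonneg _) (Finset.mem_univ ω)
    have h2 := neg_abs_le (U ω)
    linarith
  obtain ⟨U', hU'⟩ : ∃ U' : Ω → ℝ, ∀ ω, U' ω =
        if (0 < pr P (fun ω' => PaH ω' = PaH ω) ∧
              cexp P U (fun ω' => PaH ω' = PaH ω) <
                cexp P U₀ (fun ω' => PaH ω' = PaH ω)) ∧ S ω ≠ false
        then -α else U ω := ⟨_, fun _ => rfl⟩
  have hle : ∀ ω, U' ω ≤ U ω := by
    intro ω
    rw [hU']
    split_ifs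
    · exact hle0 ω
    · exact le_refl _
  have hmain : pexp P U' ≤ pexp P U - P ω₁ * (U ω₁ + α) := by
    have h1 : P ω₁ * (U ω₁ - U' ω₁) ≤ ∑ ω, P ω * (U ω - U' ω) :=
      Finset.single_le_sum (f := fun ω => P ω * (U ω - U' ω))
        (fun i _ => mul_nonneg (hP0 i) (sub_nonneg.mpr (hle i))) (Finset.mem_univ ω₁)
    have h2 : U' ω₁ = -α := by rw [hU', if_pos hcond]
    rw [h2, sub_neg_eq_add] at h1
    simp only [mul_sub, Finset.sum_sub_distrib] at h1
    unfold pexp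
    linarith
  have hbig : pexp P U - min (pexp P U₀) δ + 1 ≤ P ω₁ * (U ω₁ + α) := by
    have h1 : (pexp P U - min (pexp P U₀) δ + 1) / P ω₁ ≤ U ω₁ + α := by linarith
    rw [div_le_iff₀ hpos] at h1
    linarith
  have hm1 := min_le_left (pexp P U₀) δ
  have hm2 := min_le_right (pexp P U₀) δ
  refine ⟨α, U', hU', ?_, by linarith, by linarith⟩
  intro ω
  have key : cexp P U' (fun ω' => PaH ω' = PaH ω) < cexp P U₀ (fun ω' => PaH ω' = PaH ω) ↔
      cexp P U (fun ω' => PaH ω' = PaH ω) < cexp P U₀ (fun ω' => PaH ω' = PaH ω) := by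
    have hprn : 0 ≤ pr P (fun ω' => PaH ω' = PaH ω) := by
      unfold pr
      refine Finset.sum_nonneg ?_
      intro i _
      split_ifs
      · exact hP0 i
      · exact le_refl _
    rcases hprn.eq_or_lt with h0 | h0
    · unfold cexp
      rw [← h0]
      simp
    · by_cases hlt : cexp P U (fun ω' => PaH ω' = PaH ω) < cexp P U₀ (fun ω' => PaH ω' = PaH ω)
      · refine iff_of_true (lt_of_le_of_lt ?_ hlt) hlt
        unfold cexp
        refine div_le_div_of_nonneg_right (Finset.sum_le_sum ?_) hprn
        intro i _
        split_ifs
        · exact mul_le_mul_of_nonneg_left (hle i) (hP0 i)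
        · exact le_refl _
      · have heq : cexp P U' (fun ω' => PaH ω' = PaH ω) = cexp P U (fun ω' => PaH ω' = PaH ω) := by
          unfold cexp
          congr 1
          refine Finset.sum_congr rfl ?_
          intro i _
          split_ifs with hi
          · rw [hU', if_neg]
            rintro ⟨⟨_, hc⟩, _⟩
            rw [hi] at hc
            exact hlt hc
          · rfl
        rw [heq]
  unfold Vigilant
  rw [key]
end

section
/- (Obedience only-if lemma.) In a finite shutdown scenario with potential outcomes under forced requests, suppose H is determined by the human's observation (H = f_H ∘ PaH for some f_H : O → Bool) and the policy is disobedient: P({ω : S⁽⁰⁾(ω) ≠ false}) > 0, where S⁽⁰⁾ := S^{(false)}. Then for every δ ∈ ℝ there exist o* ∈ O with P(PaH = o*) > 0 and α ∈ ℝ such that, defining the intervened model H'(ω) := false if PaH(ω) = o* and H'(ω) := H(ω) otherwise; S'(ω) := S^{(H'(ω))}(ω); Ũ(ω) := −α if (H'(ω) = false ∧ S'(ω) ≠ false) and Ũ(ω) := U^{(H'(ω))}(ω) otherwise; Ũ₀(ω) := U₀^{(H'(ω))}(ω): (1) the intervention preserves vigilance: every ω with P({ω}) > 0 that is vigilant with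 respect to (PaH, H, U, U₀) is vigilant with respect to (PaH, H', Ũ, Ũ₀); and (2) E[Ũ] < E[Ũ₀] and E[Ũ] < δ. -/
open Finset

attribute [local instance] Classical.propDecidable

/-- Obedience only-if lemma: if H is determined by the human's
observation and the policy is disobedient (P(S⁽⁰⁾ ≠ false) > 0), then for every δ
there are o* with P(PaH = o*) > 0 and α such that the intervened model
H'(ω) = false if PaH ω = o* else H ω; S'(ω) = S^{(H' ω)}(ω);
Ũ(ω) = −α if (H' ω = false ∧ S' ω ≠ false) else U^{(H' ω)}(ω); Ũ₀(ω) = U₀^{(H' ω)}(ω)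
satisfies: (1) the intervention preserves vigilance, and (2) E[Ũ] < E[Ũ₀], E[Ũ] < δ. -/
theorem stmt8 {Ω O : Type} [Fintype Ω] [Fintype O]
    (P : Ω → ℝ) (hP0 : ∀ ω, 0 ≤ P ω) (hP1 : ∑ ω, P ω = 1)
    (PaH : Ω → O) (H S : Ω → Bool) (U U₀ : Ω → ℝ)
    (Spo : Bool → Ω → Bool) (Upo U₀po : Bool → Ω → ℝ)
    (hfactS : ∀ ω, S ω = Spo (H ω) ω)
    (hfactU : ∀ ω, U ω = Upo (H ω) ω)
    (hfactU₀ : ∀ ω, U₀ ω = U₀po (H ω) ω)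
    (hSDconsPo : ∀ h ω, Spo h ω = false → Upo h ω = U₀po h ω)
    (fH : O → Bool) (hHdet : ∀ ω, H ω = fH (PaH ω))
    (hDisob : 0 < pr P (fun ω => Spo false ω ≠ false)) :
    ∀ δ : ℝ, ∃ oStar : O, ∃ α : ℝ,
      0 < pr P (fun ω => PaH ω = oStar) ∧
      ∃ H' S' : Ω → Bool, ∃ Ut U₀t : Ω → ℝ,
        (∀ ω, H' ω = if PaH ω = oStar then false else H ω) ∧
        (∀ ω, S' ω = Spo (H' ω) ω) ∧
        (∀ ω, Ut ω = if H' ω = false ∧ S' ω ≠ false then -α else Upo (H' ω) ω) ∧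
        (∀ ω, U₀t ω = U₀po (H' ω) ω) ∧
        (∀ ω, 0 < P ω → Vigilant P PaH H U U₀ ω → Vigilant P PaH H' Ut U₀t ω) ∧
        pexp P Ut < pexp P U₀t ∧ pexp P Ut < δ := by
  intro δ
  obtain ⟨ω0, hw⟩ : ∃ ω0, 0 < P ω0 ∧ Spo false ω0 ≠ false := by
    by_contra hcon
    have h0 : pr P (fun ω => Spo false ω ≠ false) ≤ 0 := by
      unfold pr
      apply Finset.sum_nonpos
      intro ω _
      split_ifs with h
      · by_contra h2
        exact hcon ⟨ω, not_le.mp h2, h⟩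
      · exact le_refl _
    linarith
  obtain ⟨hp, hs⟩ := hw
  let H' : Ω → Bool := fun ω => if PaH ω = PaH ω0 then false else H ω
  have hH' : ∀ ω, H' ω = if PaH ω = PaH ω0 then false else H ω := fun _ => rfl
  let B : Ω → Prop := fun ω => H' ω = false ∧ Spo (H' ω) ω ≠ false
  have hB0 : B ω0 := by
    have : H' ω0 = false := by simp [hH']
    exact ⟨this, by rw [this]; exact hs⟩
  have pos : ∀ (A : Ω → Prop), A ω0 → 0 < pr P A := by
    intro A hA
    unfold pr
    apply Finset.sum_pos'
    · intro ω _
      split_ifs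
      · exact hP0 ω
      · exact le_refl _
    · exact ⟨ω0, Finset.mem_univ _, by rw [if_pos hA]; exact hp⟩
  have hq := pos B hB0
  let c : ℝ := ∑ ω, if B ω then 0 else P ω * Upo (H' ω) ω
  let e : ℝ := pexp P (fun ω => U₀po (H' ω) ω)
  let α : ℝ := (c - min δ e + 1) / pr P B
  have hα : α * pr P B = c - min δ e + 1 := div_mul_cancel₀ _ hq.ne'
  have hE : pexp P (fun ω => if B ω then -α else Upo (H' ω) ω) = c - α * pr P B := by
    simp only [pexp, pr, c, Finset.mul_sum]
    rw [← Finset.sum_sub_distrib]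
    apply Finset.sum_congr rfl
    intro ω _
    split_ifs <;> ring
  have h1 := min_le_left δ e
  have h2 := min_le_right δ e
  refine ⟨PaH ω0, α, pos _ rfl, H', fun ω => Spo (H' ω) ω,
    fun ω => if B ω then -α else Upo (H' ω) ω, fun ω => U₀po (H' ω) ω,
    hH', fun _ => rfl, ?_, fun _ => rfl, ?_, ?_, ?_⟩
  · intro ω
    by_cases h : B ω
    · rw [if_pos h]
      exact if_pos h
    · rw [if_neg h]
      exact if_neg h
  · intro ω _ hv hlt
    by_cases ho : PaH ω = PaH ω0
    · rw [hH', if_pos ho]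
    by_cases hf : H ω = false
    · rw [hH', if_neg ho, hf]
    exfalso
    apply hf
    apply hv
    have key : ∀ ω', PaH ω' = PaH ω → H' ω' = H ω' ∧ ¬ B ω' := by
      intro ω' h
      have e1 : H' ω' = H ω' := by rw [hH', if_neg (by rw [h]; exact ho)]
      refine ⟨e1, fun hb => hf ?_⟩
      rw [hHdet, ← h, ← hHdet, ← e1]
      exact hb.1
    have c1 : cexp P U (fun ω' => PaH ω' = PaH ω)
        = cexp P (fun ω => if B ω then -α else Upo (H' ω) ω) (fun ω' => PaH ω' = PaH ω) := by
      unfold cexp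
      congr 1
      apply Finset.sum_congr rfl
      intro ω' _
      by_cases h : PaH ω' = PaH ω
      · rw [if_pos h, if_pos h]
        beta_reduce
        rw [if_neg (key ω' h).2, (key ω' h).1, hfactU]
      · rw [if_neg h, if_neg h]
    have c2 : cexp P U₀ (fun ω' => PaH ω' = PaH ω)
        = cexp P (fun ω => U₀po (H' ω) ω) (fun ω' => PaH ω' = PaH ω) := by
      unfold cexp
      congr 1
      apply Finset.sum_congr rfl
      intro ω' _
      by_cases h : PaH ω' = PaH ω
      · rw [if_pos h, if_pos h]
        beta_reduce
        rw [(key ω' h).1, hfactU₀]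
      · rw [if_neg h, if_neg h]
    rw [c1, c2]
    exact hlt
  · rw [hE]
    change _ < e
    linarith
  · rw [hE]
    linarith
end

section
/- (Non-obstruction implies vigilance and obedience, contrapositive form.) In a finite shutdown scenario with potential outcomes under forced requests in which H is determined by the human's observation (H = f_H ∘ PaH), suppose the policy either does not ensure vigilance (P({ω : ω is not vigilant with respect to (PaH, H, U, U₀)}) > 0) or is disobedient (P({ω : S⁽⁰⁾(ω) ≠ false}) > 0, where S⁽⁰⁾ := S^{(false)}). Then there exist an intervened request H' : Ω → Bool and utilities Ũ, Ũ₀ : Ω → ℝ, obtained by one of the two explicit constructions — either H' = H, Ũ(ω) := −α if (PaH(ω) ∈ A ∧ S(ω) ≠ false) else U(ω) with Ũ₀ := U₀, where A := {o : P(PaH = o) > 0 ∧ E[U | PaH = o] < E[U₀ | PaH = o]}; or H'(ω) := false if PaH(ω) = o* else H(ω), S'(ω) := S^{(H'(ω))}(ω), Ũ(ω) := −α if (H'(ω) = false ∧ S'(ω) ≠ false) else U^{(H'(ω))}(ω), Ũ₀(ω) := U₀^{(H'(ω))}(ω), for some o* with P(PaH = o*) > 0 and some α ∈ ℝ — such that: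 (1) every ω with P({ω}) > 0 that is vigilant with respect to (PaH, H, U, U₀) is vigilant with respect to (PaH, H', Ũ, Ũ₀); and (2) E[Ũ] < E[Ũ₀] and E[Ũ] < 0. -/
open Finset

attribute [local instance] Classical.propDecidable

theorem aux_alpha {Ω : Type} [Fintype Ω] (P V : Ω → ℝ) (hP0 : ∀ ω, 0 ≤ P ω)
    (B : Ω → Prop) (ω₀ : Ω) (h0 : 0 < P ω₀) (hB : B ω₀) (c : ℝ) :
    ∃ α : ℝ, ∀ W : Ω → ℝ, (∀ ω, B ω → W ω = -α) → (∀ ω, ¬ B ω → W ω = V ω) →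
      pexp P W < c := by
  have hq : 0 < ∑ ω, if B ω then P ω else 0 := by
    apply Finset.sum_pos'
    · intro i _
      split_ifs
      · exact hP0 i
      · exact le_rfl
    · exact ⟨ω₀, Finset.mem_univ _, by simpa [hB] using h0⟩
  set q := ∑ ω, (if B ω then P ω else 0) with hqd
  set K := ∑ ω, (if B ω then 0 else P ω * V ω) with hK
  refine ⟨(K - c + 1) / q, fun W hW1 hW2 => ?_⟩
  have : pexp P W
      = -((K - c + 1) / q) * q + K := by
    unfold pexp
    have e : ∀ a : ℝ, (∀ ω, B ω → W ω = a) → ∑ ω, P ω * W ω = a * q + K := by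
      intro a ha
      rw [hqd, hK, Finset.mul_sum, ← Finset.sum_add_distrib]
      apply Finset.sum_congr rfl
      intro ω _
      by_cases h : B ω
      · simp only [h, if_true, ha ω h]; ring
      · simp [h, hW2 ω h]
    exact e _ hW1
  rw [this, neg_mul, div_mul_cancel₀ _ hq.ne']
  linarith

theorem aux_exists {Ω : Type} [Fintype Ω] (P : Ω → ℝ)
    (B : Ω → Prop) (h : 0 < pr P B) : ∃ ω, 0 < P ω ∧ B ω := by
  by_contra! hc
  have : pr P B ≤ 0 := by
    unfold pr
    apply Finset.sum_nonpos
    intro i _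
    split_ifs with hb
    · by_contra! hi
      exact hc i hi hb
    · exact le_rfl
  linarith

theorem aux_pr_pos {Ω : Type} [Fintype Ω] (P : Ω → ℝ) (hP0 : ∀ ω, 0 ≤ P ω)
    (B : Ω → Prop) (ω₀ : Ω) (h0 : 0 < P ω₀) (hB : B ω₀) : 0 < pr P B := by
  unfold pr
  apply Finset.sum_pos'
  · intro i _
    split_ifs
    · exact hP0 i
    · exact le_rfl
  · exact ⟨ω₀, Finset.mem_univ _, by simpa [hB] using h0⟩

theorem aux_cexp {Ω : Type} [Fintype Ω] (P X Y : Ω → ℝ)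
    (B : Ω → Prop) (h : ∀ ω, B ω → X ω = Y ω) : cexp P X B = cexp P Y B := by
  unfold cexp
  congr 1
  apply Finset.sum_congr rfl
  intro ω _
  split_ifs with hb
  · rw [h ω hb]
  · rfl

/-- Non-obstruction implies vigilance and obedience, contrapositive
form: if the policy does not ensure vigilance or is disobedient, then one of the two
explicit interventions (punished utility on A ∩ {S ≠ false} with H' = H, or a forced
request at some o* with punishment for disobedience) preserves vigilance while making
the policy fail to weakly outperform shutdown and fail to be beneficial. -/
theorem stmt9 {Ω O : Type} [Fintype Ω] [Fintype O]
    (P : Ω → ℝ) (hP0 : ∀ ω, 0 ≤ P ω) (hP1 : ∑ ω, P ω = 1)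
    (PaH : Ω → O) (H S : Ω → Bool) (U U₀ : Ω → ℝ)
    (hSDcons : ∀ ω, S ω = false → U ω = U₀ ω)
    (Spo : Bool → Ω → Bool) (Upo U₀po : Bool → Ω → ℝ)
    (hfactS : ∀ ω, S ω = Spo (H ω) ω)
    (hfactU : ∀ ω, U ω = Upo (H ω) ω)
    (hfactU₀ : ∀ ω, U₀ ω = U₀po (H ω) ω)
    (hSDconsPo : ∀ h ω, Spo h ω = false → Upo h ω = U₀po h ω)
    (fH : O → Bool) (hHdet : ∀ ω, H ω = fH (PaH ω))
    (hBad : 0 < pr P (fun ω => ¬ Vigilant P PaH H U U₀ ω) ∨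
            0 < pr P (fun ω => Spo false ω ≠ false)) :
    ∃ H' : Ω → Bool, ∃ Ut U₀t : Ω → ℝ,
      ((∃ α : ℝ,
          (∀ ω, H' ω = H ω) ∧
          (∀ ω, Ut ω =
            if (0 < pr P (fun ω' => PaH ω' = PaH ω) ∧
                  cexp P U (fun ω' => PaH ω' = PaH ω) <
                    cexp P U₀ (fun ω' => PaH ω' = PaH ω)) ∧ S ω ≠ false
            then -α else U ω) ∧
          (∀ ω, U₀t ω = U₀ ω)) ∨
       (∃ oStar : O, ∃ α : ℝ,
          0 < pr P (fun ω => PaH ω = oStar) ∧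
          (∀ ω, H' ω = if PaH ω = oStar then false else H ω) ∧
          (∀ ω, Ut ω =
            if H' ω = false ∧ Spo (H' ω) ω ≠ false
            then -α else Upo (H' ω) ω) ∧
          (∀ ω, U₀t ω = U₀po (H' ω) ω))) ∧
      (∀ ω, 0 < P ω → Vigilant P PaH H U U₀ ω → Vigilant P PaH H' Ut U₀t ω) ∧
      pexp P Ut < pexp P U₀t ∧ pexp P Ut < 0 := by
  rcases hBad with hb | hb
  · obtain ⟨ω₀, hp, hv⟩ := aux_exists P _ hb
    unfold Vigilant at hv
    push Not at hv
    obtain ⟨hlt, _⟩ := hv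
    have hpos := aux_pr_pos P hP0 (fun ω' => PaH ω' = PaH ω₀) ω₀ hp rfl
    have h1 : ∃ ω₁, PaH ω₁ = PaH ω₀ ∧ 0 < P ω₁ ∧ S ω₁ ≠ false := by
      by_contra! hc
      refine absurd hlt (not_lt.mpr (le_of_eq ?_))
      unfold cexp
      congr 1
      apply Finset.sum_congr rfl
      intro ω _
      split_ifs with hb
      · rcases (hP0 ω).eq_or_lt with h | h
        · rw [← h]; simp
        · rw [hSDcons ω (hc ω hb h)]
      · rfl
    obtain ⟨ω₁, he, hp1, hS1⟩ := h1
    obtain ⟨α, hα⟩ := aux_alpha P U hP0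
      (fun ω => (0 < pr P (fun ω' => PaH ω' = PaH ω) ∧
        cexp P U (fun ω' => PaH ω' = PaH ω) <
          cexp P U₀ (fun ω' => PaH ω' = PaH ω)) ∧ S ω ≠ false) ω₁ hp1
      (by simp only [he]; exact ⟨⟨hpos, hlt⟩, hS1⟩) (min (pexp P U₀) 0)
    refine ⟨H, _, U₀, Or.inl ⟨α, fun _ => rfl, fun _ => rfl, fun _ => rfl⟩, ?_,
      (hα _ (fun _ h => if_pos h) (fun _ h => if_neg h)).trans_le (min_le_left _ _),
      (hα _ (fun _ h => if_pos h) (fun _ h => if_neg h)).trans_le (min_le_right _ _)⟩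
    intro ω _ hv hlt'
    by_cases hA : cexp P U (fun ω' => PaH ω' = PaH ω) < cexp P U₀ (fun ω' => PaH ω' = PaH ω)
    · exact hv hA
    · exfalso
      apply hA
      refine lt_of_eq_of_lt (aux_cexp P _ _ _ ?_) hlt'
      intro ω' hω'
      simp only [hω']
      rw [if_neg (fun h => hA h.1.2)]
  · obtain ⟨ω₀, hp, hS⟩ := aux_exists P _ hb
    have hpos := aux_pr_pos P hP0 (fun ω' => PaH ω' = PaH ω₀) ω₀ hp rfl
    obtain ⟨H', hH'⟩ : ∃ H' : Ω → Bool, ∀ ω, H' ω = if PaH ω = PaH ω₀ then false else H ω :=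
      ⟨_, fun _ => rfl⟩
    have h0 : H' ω₀ = false := by simp [hH']
    obtain ⟨α, hα⟩ := aux_alpha P (fun ω => Upo (H' ω) ω) hP0
      (fun ω => H' ω = false ∧ Spo (H' ω) ω ≠ false) ω₀ hp
      ⟨h0, by rw [h0]; exact hS⟩ (min (pexp P (fun ω => U₀po (H' ω) ω)) 0)
    refine ⟨H', _, fun ω => U₀po (H' ω) ω,
      Or.inr ⟨PaH ω₀, α, hpos, hH', fun _ => rfl, fun _ => rfl⟩, ?_,
      (hα _ (fun _ h => if_pos h) (fun _ h => if_neg h)).trans_le (min_le_left _ _),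
      (hα _ (fun _ h => if_pos h) (fun _ h => if_neg h)).trans_le (min_le_right _ _)⟩
    intro ω _ hv hlt'
    by_cases ho : PaH ω = PaH ω₀
    · simp [hH', ho]
    · have hHeq : ∀ ω', PaH ω' = PaH ω → H' ω' = H ω' := by
        intro ω' h
        rw [hH', if_neg (by rw [h]; exact ho)]
      by_contra hne
      apply hne
      rw [hHeq ω rfl]
      apply hv
      refine lt_of_eq_of_lt (aux_cexp P U _ _ ?_) (lt_of_lt_of_eq hlt' (aux_cexp P _ U₀ _ ?_))
      rotate_left
      · intro ω' h
        simp only [hHeq ω' h, hfactU₀ ω']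
      · intro ω' h
        have : H' ω' ≠ false := by
          rw [hHeq ω' h, hHdet, h, ← hHdet, ← hHeq ω rfl]
          exact hne
        beta_reduce
        rw [if_neg (fun hh => this hh.1), hHeq ω' h, hfactU ω']
end
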